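/- arXiv:2301.05153 — 2 statements merged into one kernel-verified Lean document; each statement's English description precedes it below -/
import Mathlib

section
/- Suppose that m is a multicore such that |γ^{jk}_{il}(m)| ≤ 2 for all i,l ∈ {0,…,e−1} and j,k ∈ {1,…,r}. Fix ī ∈ ℤ/eℤ, and let d be the integer such that d_ī(m) = d − 1. Then δ^j_ī(m) ∈ {d−1, d, d+1} for all j ∈ {1,…,r}. -/
/-!
Combinatorial framework for multipartitions, residues, β-sets, abacus levels,
weights, hubs, core blocks and Scopes-type moves, following Fayers and the paper.
Rows and columns of Young diagrams are indexed from 0, so the node in row `b`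
and column `c` (0-based) of component `j` has residue `a j + c - b` mod `e`.
-/

open scoped Classical

namespace AK

/-- A partition, given by its (antitone, finitely supported) sequence of parts,
rows indexed from `0`. -/
structure PartitionFun : Type where
  part : ℕ → ℕ
  antitone : Antitone part
  finite_support : ∃ N, ∀ b, N ≤ b → part b = 0

/-- The node in row `b`, column `c` (0-based) belongs to the Young diagram. -/
def PartitionFun.InDiag (lam : PartitionFun) (b c : ℕ) : Prop := c < lam.part b

/-- The node `(b,c)` is removable: deleting it leaves the diagram of a partition. -/
def PartitionFun.Removable (lam : PartitionFun) (b c : ℕ) : Prop :=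
  lam.part b = c + 1 ∧ lam.part (b + 1) ≤ c

/-- The node `(b,c)` is addable: adjoining it gives the diagram of a partition. -/
def PartitionFun.Addable (lam : PartitionFun) (b c : ℕ) : Prop :=
  lam.part b = c ∧ (b = 0 ∨ lam.part b < lam.part (b - 1))

/-- An `r`-multipartition. -/
abbrev Multipartition (r : ℕ) := Fin r → PartitionFun

/-- Nodes: `(b, c, j)` with row `b`, column `c`, component `j`. -/
abbrev Node (r : ℕ) := ℕ × ℕ × Fin r

/-- The Young diagram of a multipartition, as a set of nodes. -/
def diag {r : ℕ} (lam : Multipartition r) : Set (Node r) :=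
  {x | (lam x.2.2).InDiag x.1 x.2.1}

/-- The size `n` of a multipartition of `n`. -/
noncomputable def msize {r : ℕ} (lam : Multipartition r) : ℕ :=
  Set.ncard (diag lam)

/-- `c_i(λ)`: the number of nodes of residue `i` (mod `e`). -/
noncomputable def nodeCount {r : ℕ} (e : ℕ) (a : Fin r → ℤ) (lam : Multipartition r)
    (i : ℤ) : ℕ :=
  Set.ncard {x : Node r | (lam x.2.2).InDiag x.1 x.2.1 ∧
    (a x.2.2 + (x.2.1 : ℤ) - (x.1 : ℤ)) % (e : ℤ) = i % e}

/-- Number of removable nodes of residue `i` in component `j`. -/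
noncomputable def removableCount {r : ℕ} (e : ℕ) (a : Fin r → ℤ) (lam : Multipartition r)
    (i : ℤ) (j : Fin r) : ℕ :=
  Set.ncard {p : ℕ × ℕ | (lam j).Removable p.1 p.2 ∧
    (a j + (p.2 : ℤ) - (p.1 : ℤ)) % (e : ℤ) = i % e}

/-- Number of addable nodes of residue `i` in component `j`. -/
noncomputable def addableCount {r : ℕ} (e : ℕ) (a : Fin r → ℤ) (lam : Multipartition r)
    (i : ℤ) (j : Fin r) : ℕ :=
  Set.ncard {p : ℕ × ℕ | (lam j).Addable p.1 p.2 ∧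
    (a j + (p.2 : ℤ) - (p.1 : ℤ)) % (e : ℤ) = i % e}

/-- `δ^j_i(λ)` = (removable `i`-nodes of component `j`) − (addable `i`-nodes of component `j`). -/
noncomputable def delta {r : ℕ} (e : ℕ) (a : Fin r → ℤ) (lam : Multipartition r)
    (i : ℤ) (j : Fin r) : ℤ :=
  (removableCount e a lam i j : ℤ) - (addableCount e a lam i j : ℤ)

/-- The hub `δ_i(λ) = Σ_j δ^j_i(λ)`. -/
noncomputable def hub {r : ℕ} (e : ℕ) (a : Fin r → ℤ) (lam : Multipartition r) (i : ℤ) : ℤ :=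
  ∑ j : Fin r, delta e a lam i j

/-- Two multipartitions have the same hub. -/
def SameHub {r : ℕ} (e : ℕ) (a : Fin r → ℤ) (lam mu : Multipartition r) : Prop :=
  ∀ i : ℤ, hub e a lam i = hub e a mu i

/-- `d_i(m) = min { δ^j_i(m) : 1 ≤ j ≤ r }`. -/
noncomputable def dmin {r : ℕ} (e : ℕ) (a : Fin r → ℤ) (lam : Multipartition r) (i : ℤ) : ℤ :=
  sInf {x : ℤ | ∃ j : Fin r, delta e a lam i j = x}

/-- The weight `w(λ) = Σ_j c_{a_j}(λ) − (1/2) Σ_{i∈ℤ/eℤ} (c_i(λ) − c_{i+1}(λ))²`. -/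
noncomputable def weight {r : ℕ} (e : ℕ) (a : Fin r → ℤ) (lam : Multipartition r) : ℚ :=
  (∑ j : Fin r, (nodeCount e a lam (a j) : ℚ)) -
    (1 / 2 : ℚ) * ∑ i ∈ Finset.range e,
      ((nodeCount e a lam (i : ℤ) : ℚ) - (nodeCount e a lam ((i : ℤ) + 1) : ℚ)) ^ 2

/-- The β-set `B^j = {λ_b + a_j − b : b ≥ 1}` (here with rows indexed from 0). -/
def betaSet (aj : ℤ) (lam : PartitionFun) : Set ℤ :=
  {x | ∃ b : ℕ, x = (lam.part b : ℤ) + aj - ((b : ℤ) + 1)}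

/-- A partition is an `e`-core: `β ∈ B` implies `β − e ∈ B`. -/
def IsECore (e : ℕ) (aj : ℤ) (lam : PartitionFun) : Prop :=
  ∀ x ∈ betaSet aj lam, x - (e : ℤ) ∈ betaSet aj lam

/-- A multicore: all components are `e`-cores. -/
def IsMulticore {r : ℕ} (e : ℕ) (a : Fin r → ℤ) (lam : Multipartition r) : Prop :=
  ∀ j, IsECore e (a j) (lam j)

/-- `ℓ^a_{ij}(λ)`: the level of the lowest bead on runner `i`, i.e. the largest `x`
with `x·e + i` in the β-set. -/
noncomputable def level (e : ℕ) (aj : ℤ) (lam : PartitionFun) (i : ℕ) : ℤ :=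
  sSup {x : ℤ | x * (e : ℤ) + (i : ℤ) ∈ betaSet aj lam}

/-- `γ^{jk}_i(λ) = ℓ^a_{ij}(λ) − ℓ^a_{ik}(λ)`. -/
noncomputable def gamma {r : ℕ} (e : ℕ) (a : Fin r → ℤ) (lam : Multipartition r)
    (i : ℕ) (j k : Fin r) : ℤ :=
  level e (a j) (lam j) i - level e (a k) (lam k) i

/-- `γ^{jk}_{il}(λ) = γ^{jk}_i(λ) − γ^{jk}_l(λ)`. -/
noncomputable def gammaD {r : ℕ} (e : ℕ) (a : Fin r → ℤ) (lam : Multipartition r)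
    (i l : ℕ) (j k : Fin r) : ℤ :=
  gamma e a lam i j k - gamma e a lam l j k

/-- Move a bead from runner `i` to runner `l` in the β-set `S`: replace the largest
element of `S` congruent to `i` mod `e` by the smallest integer congruent to `l`
mod `e` not in `S`. -/
noncomputable def moveBead (e : ℕ) (i l : ℕ) (S : Set ℤ) : Set ℤ :=
  insert (sInf {x : ℤ | x % (e : ℤ) = (l : ℤ) % e ∧ x ∉ S})
    (S \ {sSup {x : ℤ | x % (e : ℤ) = (i : ℤ) % e ∧ x ∈ S}})

/-- The effect of `s^{jk}_{il}` on the tuple of β-sets: move a bead from runner `i`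
to runner `l` in component `j`, and from runner `l` to runner `i` in component `k`. -/
noncomputable def swapSets {r : ℕ} (e i l : ℕ) (j k : Fin r) (S : Fin r → Set ℤ) :
    Fin r → Set ℤ :=
  Function.update (Function.update S j (moveBead e i l (S j))) k
    (moveBead e l i (Function.update S j (moveBead e i l (S j)) k))

/-- `m' = s^{jk}_{il}(m)`, expressed via β-sets. -/
def IsSwap {r : ℕ} (e : ℕ) (a : Fin r → ℤ) (i l : ℕ) (j k : Fin r)
    (m m' : Multipartition r) : Prop :=
  ∀ j', betaSet (a j') (m' j') = swapSets e i l j k (fun t => betaSet (a t) (m t)) j'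

/-- `λ` lies in a core block: its weight is minimal among the weights of all
multipartitions with the same hub. -/
def MinimalWeight {r : ℕ} (e : ℕ) (a : Fin r → ℤ) (lam : Multipartition r) : Prop :=
  ∀ mu : Multipartition r, SameHub e a lam mu → weight e a lam ≤ weight e a mu

/-- `(b_0,…,b_{e−1})` is a base tuple for `mu` with respect to the multicharge `a'`
(congruent to `a` componentwise mod `e`): each `ℓ^{a'}_{ij}(mu)` is `b i` or `b i + 1`. -/
def IsBaseTuple {r : ℕ} (e : ℕ) (a : Fin r → ℤ) (mu : Multipartition r)
    (a' : Fin r → ℤ) (b : ℕ → ℤ) : Prop :=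
  (∀ j, (e : ℤ) ∣ (a' j - a j)) ∧
    ∀ i < e, ∀ j, level e (a' j) (mu j) i = b i ∨ level e (a' j) (mu j) i = b i + 1

/-- `K_i(C)` for the core block of `mu`: among all base tuples (over all admissible
multicharges), take `b i` maximal and then `b (i−1)` minimal, and set
`K_i = b_i − b_{i−1} − 1` for `i ≠ 0`, `K_0 = b_0 − b_{e−1} − 2`. -/
noncomputable def Kconst {r : ℕ} (e : ℕ) (a : Fin r → ℤ) (mu : Multipartition r)
    (i : ℕ) : ℤ :=
  let Bi : ℤ := sSup {x : ℤ | ∃ a' bt, IsBaseTuple e a mu a' bt ∧ bt i = x}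
  let iprev : ℕ := if i = 0 then e - 1 else i - 1
  let Bp : ℤ := sInf {x : ℤ | ∃ a' bt, IsBaseTuple e a mu a' bt ∧ bt i = Bi ∧ bt iprev = x}
  Bi - Bp - (if i = 0 then 2 else 1)

/-- The map `φ_i : ℤ → ℤ`. -/
def phiMap (e i : ℕ) (x : ℤ) : ℤ :=
  if x % (e : ℤ) = ((i : ℤ) - 1) % e then x + 1
  else if x % (e : ℤ) = (i : ℤ) % e then x - 1
  else x

/-- Lexicographic order on multipartitions: `λ > μ`. -/
def lexGT {r : ℕ} (lam mu : Multipartition r) : Prop :=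
  ∃ j : Fin r, (∀ j' < j, (lam j').part = (mu j').part) ∧
    ∃ i : ℕ, (∀ i' < i, (lam j).part i' = (mu j).part i') ∧
      (mu j).part i < (lam j).part i

/-- `x` is above `y`: `j < j'` or (`j = j'` and `b < b'`). -/
def NodeAbove {r : ℕ} (x y : Node r) : Prop :=
  x.2.2 < y.2.2 ∨ (x.2.2 = y.2.2 ∧ x.1 < y.1)

/-- The order on nodes: `x < y` iff `y` is above `x`. -/
def NodeLT {r : ℕ} (x y : Node r) : Prop := NodeAbove y x

/-- `N_A(λ)` = (addable `i`-nodes of `λ` below `A`) − (removable `i`-nodes of `λ` below `A`). -/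
noncomputable def Nfac {r : ℕ} (e : ℕ) (a : Fin r → ℤ) (lam : Multipartition r)
    (i : ℤ) (A : Node r) : ℤ :=
  (Set.ncard {y : Node r | (lam y.2.2).Addable y.1 y.2.1 ∧
      (a y.2.2 + (y.2.1 : ℤ) - (y.1 : ℤ)) % (e : ℤ) = i % e ∧ NodeAbove A y} : ℤ) -
  (Set.ncard {y : Node r | (lam y.2.2).Removable y.1 y.2.1 ∧
      (a y.2.2 + (y.2.1 : ℤ) - (y.1 : ℤ)) % (e : ℤ) = i % e ∧ NodeAbove A y} : ℤ)

/-- `lam` is obtained from `mu` by adding one `e`-rim hook to some component: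
on β-sets, some `β ∈ B^j` with `β + e ∉ B^j` is replaced by `β + e`. -/
def AddRimHook {r : ℕ} (e : ℕ) (a : Fin r → ℤ) (mu lam : Multipartition r) : Prop :=
  ∃ (j : Fin r) (β : ℤ), β ∈ betaSet (a j) (mu j) ∧ β + (e : ℤ) ∉ betaSet (a j) (mu j) ∧
    betaSet (a j) (lam j) = insert (β + (e : ℤ)) (betaSet (a j) (mu j) \ {β}) ∧
    ∀ j' ≠ j, betaSet (a j') (lam j') = betaSet (a j') (mu j')

/-- The number of inversions (length) of a permutation of `Fin d`. -/
noncomputable def permLength (d : ℕ) (σ : Equiv.Perm (Fin d)) : ℕ :=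
  (Finset.univ.filter (fun p : Fin d × Fin d => p.1 < p.2 ∧ σ p.2 < σ p.1)).card

theorem beta_bound (aj : ℤ) (lam : PartitionFun) (x : ℤ) (hx : x ∈ betaSet aj lam) :
    x ≤ lam.part 0 + aj - 1 := by
  obtain ⟨b, rfl⟩ := hx
  have := lam.antitone (Nat.zero_le b)
  omega

theorem beta_low (aj : ℤ) (lam : PartitionFun) :
    ∃ M : ℤ, ∀ x ≤ M, x ∈ betaSet aj lam := by
  obtain ⟨N, hN⟩ := lam.finite_support
  refine ⟨aj - N - 1, fun x hx => ⟨(aj - x - 1).toNat, ?_⟩⟩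
  rw [hN _ (by omega)]
  have : (((aj - x - 1).toNat : ℕ) : ℤ) = aj - x - 1 := Int.toNat_of_nonneg (by omega)
  rw [this]; push_cast; ring

theorem core_sub (e : ℕ) (aj : ℤ) (lam : PartitionFun) (hc : IsECore e aj lam) (n : ℕ) :
    ∀ x ∈ betaSet aj lam, x - (n : ℤ) * e ∈ betaSet aj lam := by
  induction n with
  | zero => intro x hx; simpa using hx
  | succ n ih =>
    intro x hx
    have := hc _ (ih x hx)
    convert this using 1
    push_cast; ring

theorem level_spec (e : ℕ) (he : 0 < e) (aj : ℤ) (lam : PartitionFun) (hc : IsECore e aj lam)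
    (i : ℕ) (x : ℤ) : x * (e : ℤ) + i ∈ betaSet aj lam ↔ x ≤ level e aj lam i := by
  have hbdd : BddAbove {x : ℤ | x * (e : ℤ) + (i : ℤ) ∈ betaSet aj lam} := by
    refine ⟨max 0 (lam.part 0 + aj - 1), fun y hy => ?_⟩
    have h1 := beta_bound aj lam _ hy
    rcases le_or_gt y 0 with h | h
    · exact le_max_of_le_left h
    · apply le_max_of_le_right
      have : y * 1 ≤ y * (e : ℤ) := mul_le_mul_of_nonneg_left (by omega) h.le
      omega
  have hne : {x : ℤ | x * (e : ℤ) + (i : ℤ) ∈ betaSet aj lam}.Nonempty := by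
    obtain ⟨M, hM⟩ := beta_low aj lam
    refine ⟨min 0 (M - i), hM _ ?_⟩
    have h0 : min 0 (M - i) ≤ (0 : ℤ) := min_le_left _ _
    have h1 : min 0 (M - i) ≤ M - (i : ℤ) := min_le_right _ _
    have : min 0 (M - i) * (e : ℤ) ≤ min 0 (M - (i : ℤ)) * 1 :=
      mul_le_mul_of_nonpos_left (by omega) h0
    omega
  constructor
  · intro h
    exact le_csSup hbdd h
  · intro h
    have hm : level e aj lam i * (e : ℤ) + i ∈ betaSet aj lam := Int.csSup_mem hne hbdd
    have := core_sub e aj lam hc (level e aj lam i - x).toNat _ hm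
    rw [Int.toNat_of_nonneg (by omega)] at this
    convert this using 1
    ring

theorem pred_notMem (aj : ℤ) (lam : PartitionFun) (b : ℕ) :
    (lam.part b : ℤ) + aj - (b + 1) - 1 ∉ betaSet aj lam ↔ lam.part (b + 1) < lam.part b := by
  have h1 := lam.antitone (Nat.le_succ b)
  constructor
  · intro h
    by_contra hlt
    apply h
    refine ⟨b + 1, ?_⟩
    have : lam.part (b+1) = lam.part b := by simp only [Nat.succ_eq_add_one] at h1; omega
    rw [this]; push_cast; ring
  · rintro h ⟨b', hb'⟩
    rcases le_or_gt b' b with h2 | h2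
    · have := lam.antitone h2
      omega
    · have := lam.antitone (show b + 1 ≤ b' from h2)
      omega

theorem succ_notMem (aj : ℤ) (lam : PartitionFun) (b : ℕ) :
    (lam.part b : ℤ) + aj - (b + 1) + 1 ∉ betaSet aj lam ↔
      (b = 0 ∨ lam.part b < lam.part (b - 1)) := by
  constructor
  · intro h
    by_contra hlt
    push Not at hlt
    apply h
    refine ⟨b - 1, ?_⟩
    have := lam.antitone (Nat.sub_le b 1)
    have : lam.part (b-1) = lam.part b := by omega
    rw [this]; push_cast [Nat.one_le_iff_ne_zero.2 hlt.1]; ring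
  · rintro h ⟨b', hb'⟩
    rcases le_or_gt b b' with h2 | h2
    · have := lam.antitone h2
      omega
    · have := lam.antitone (show b' ≤ b - 1 by omega)
      omega

theorem div_mod_eq {e : ℕ} {x y i : ℤ} (hx : x % (e : ℤ) = i) (hy : y % (e : ℤ) = i)
    (h : x / (e : ℤ) = y / (e : ℤ)) : x = y := by
  have h1 := Int.mul_ediv_add_emod x e
  have h2 := Int.mul_ediv_add_emod y e
  rw [← h1, ← h2, hx, hy, h]

theorem rem_ncard (e : ℕ) (he : 0 < e) (aj : ℤ) (lam : PartitionFun) (i L L' : ℤ)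
    (hL : ∀ x : ℤ, x * (e : ℤ) + i % e ∈ betaSet aj lam ↔ x ≤ L)
    (hL' : ∀ x : ℤ, x * (e : ℤ) + i % e - 1 ∈ betaSet aj lam ↔ x ≤ L') :
    Set.ncard {p : ℕ × ℕ | lam.Removable p.1 p.2 ∧
      (aj + (p.2 : ℤ) - (p.1 : ℤ)) % (e : ℤ) = i % e} = (L - L').toNat := by
  have himg : (fun p : ℕ × ℕ => (aj + (p.2 : ℤ) - (p.1 : ℤ)) / (e : ℤ)) ''
      {p : ℕ × ℕ | lam.Removable p.1 p.2 ∧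
      (aj + (p.2 : ℤ) - (p.1 : ℤ)) % (e : ℤ) = i % e} = Set.Ioc L' L := by
    ext k
    constructor
    · rintro ⟨⟨b, c⟩, ⟨⟨h1, h2⟩, h3⟩, rfl⟩
      dsimp only at h1 h2 h3 ⊢
      have hx := Int.mul_ediv_add_emod (aj + (c : ℤ) - (b : ℤ)) e
      rw [h3, mul_comm] at hx
      have hp := (pred_notMem aj lam b).2 (by omega)
      constructor
      · rw [← not_le, ← hL', hx]
        convert hp using 2
        rw [h1]; push_cast; ring
      · rw [← hL, hx]
        exact ⟨b, by rw [h1]; push_cast; ring⟩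
    · rintro ⟨h1, h2⟩
      rw [← not_le, ← hL'] at h1
      rw [← hL] at h2
      obtain ⟨b, hb⟩ := h2
      rw [hb, pred_notMem] at h1
      have hc : aj + ((lam.part b - 1 : ℕ) : ℤ) - (b : ℤ) = i % e + k * e := by omega
      refine ⟨(b, lam.part b - 1), ⟨⟨?_, ?_⟩, ?_⟩, ?_⟩
      · dsimp only; omega
      · dsimp only; omega
      · dsimp only; rw [hc]; simp
      · dsimp only; rw [hc, Int.add_mul_ediv_right _ _ (by omega),
          Int.ediv_eq_zero_of_lt (Int.emod_nonneg _ (by omega)) (Int.emod_lt_of_pos _ (by omega))]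
        simp
  rw [← Set.ncard_image_of_injOn (f := fun p : ℕ × ℕ => (aj + (p.2 : ℤ) - (p.1 : ℤ)) / (e : ℤ)),
    himg]
  · rw [← Finset.coe_Ioc, Set.ncard_coe_finset, Int.card_Ioc]
  · rintro ⟨b, c⟩ ⟨⟨h1, h2⟩, h3⟩ ⟨b', c'⟩ ⟨⟨h1', h2'⟩, h3'⟩ h
    dsimp only at h h1 h2 h3 h1' h2' h3'
    have := div_mod_eq h3 h3' h
    have hbb : b = b' := by
      rcases lt_trichotomy b b' with h4 | h4 | h4
      · have := lam.antitone h4.le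
        omega
      · exact h4
      · have := lam.antitone h4.le
        omega
    subst hbb
    have : c = c' := by omega
    rw [this]

theorem add_ncard (e : ℕ) (he : 0 < e) (aj : ℤ) (lam : PartitionFun) (i L L' : ℤ)
    (hL : ∀ x : ℤ, x * (e : ℤ) + i % e ∈ betaSet aj lam ↔ x ≤ L)
    (hL' : ∀ x : ℤ, x * (e : ℤ) + i % e - 1 ∈ betaSet aj lam ↔ x ≤ L') :
    Set.ncard {p : ℕ × ℕ | lam.Addable p.1 p.2 ∧
      (aj + (p.2 : ℤ) - (p.1 : ℤ)) % (e : ℤ) = i % e} = (L' - L).toNat := by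
  have himg : (fun p : ℕ × ℕ => (aj + (p.2 : ℤ) - (p.1 : ℤ)) / (e : ℤ)) ''
      {p : ℕ × ℕ | lam.Addable p.1 p.2 ∧
      (aj + (p.2 : ℤ) - (p.1 : ℤ)) % (e : ℤ) = i % e} = Set.Ioc L L' := by
    ext k
    constructor
    · rintro ⟨⟨b, c⟩, ⟨⟨h1, h2⟩, h3⟩, rfl⟩
      dsimp only at h1 h2 h3 ⊢
      have hx := Int.mul_ediv_add_emod (aj + (c : ℤ) - (b : ℤ)) e
      rw [h3, mul_comm] at hx
      have hp := (succ_notMem aj lam b).2 h2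
      constructor
      · rw [← not_le, ← hL, hx]
        convert hp using 2
        rw [h1]; ring
      · rw [← hL', hx]
        exact ⟨b, by rw [h1]; ring⟩
    · rintro ⟨h1, h2⟩
      rw [← not_le, ← hL] at h1
      rw [← hL'] at h2
      obtain ⟨b, hb⟩ := h2
      have hb2 : k * (e : ℤ) + i % e = (lam.part b : ℤ) + aj - (b + 1) + 1 := by omega
      rw [hb2, succ_notMem] at h1
      have hc : aj + ((lam.part b : ℕ) : ℤ) - (b : ℤ) = i % e + k * e := by omega
      refine ⟨(b, lam.part b), ⟨⟨rfl, h1⟩, ?_⟩, ?_⟩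
      · dsimp only; rw [hc]; simp
      · dsimp only; rw [hc, Int.add_mul_ediv_right _ _ (by omega),
          Int.ediv_eq_zero_of_lt (Int.emod_nonneg _ (by omega)) (Int.emod_lt_of_pos _ (by omega))]
        simp
  rw [← Set.ncard_image_of_injOn (f := fun p : ℕ × ℕ => (aj + (p.2 : ℤ) - (p.1 : ℤ)) / (e : ℤ)),
    himg]
  · rw [← Finset.coe_Ioc, Set.ncard_coe_finset, Int.card_Ioc]
  · rintro ⟨b, c⟩ ⟨⟨h1, h2⟩, h3⟩ ⟨b', c'⟩ ⟨⟨h1', h2'⟩, h3'⟩ h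
    dsimp only at h h1 h2 h3 h1' h2' h3'
    have := div_mod_eq h3 h3' h
    have hbb : b = b' := by
      rcases lt_trichotomy b b' with h4 | h4 | h4
      · have := lam.antitone h4.le
        omega
      · exact h4
      · have := lam.antitone h4.le
        omega
    subst hbb
    have : c = c' := by omega
    rw [this]

theorem delta_eq {e r : ℕ} (he : 2 ≤ e) (a : Fin r → ℤ)
    (m : Multipartition r) (hcore : IsMulticore e a m) (ibar : ℤ) :
    ∃ i < e, ∃ l < e, ∃ t : ℤ, ∀ j, delta e a m ibar j =
      level e (a j) (m j) i - level e (a j) (m j) l - t := by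
  have h0 : 0 ≤ ibar % (e : ℤ) := Int.emod_nonneg _ (by omega)
  have h1 : ibar % (e : ℤ) < e := Int.emod_lt_of_pos _ (by omega)
  obtain ⟨i, hi⟩ := Int.eq_ofNat_of_zero_le h0
  have key : ∃ l < e, ∃ t : ℤ, ∀ x : ℤ, x * (e : ℤ) + i - 1 = (x - t) * e + l := by
    rcases Nat.eq_zero_or_pos i with h | h
    · refine ⟨e - 1, by omega, 1, fun x => ?_⟩
      subst h
      push_cast [show 1 ≤ e by omega]; ring
    · refine ⟨i - 1, by omega, 0, fun x => ?_⟩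
      push_cast [show 1 ≤ i by omega]; ring
  obtain ⟨l, hl, t, ht⟩ := key
  refine ⟨i, by omega, l, hl, t, fun j => ?_⟩
  have hL : ∀ x : ℤ, x * (e : ℤ) + ibar % e ∈ betaSet (a j) (m j) ↔
      x ≤ level e (a j) (m j) i := by
    intro x; rw [hi]; exact level_spec e (by omega) _ _ (hcore j) i x
  have hL' : ∀ x : ℤ, x * (e : ℤ) + ibar % e - 1 ∈ betaSet (a j) (m j) ↔
      x ≤ level e (a j) (m j) l + t := by
    intro x; rw [hi]
    have h := level_spec e (by omega) _ _ (hcore j) l (x - t)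
    rw [← ht x] at h
    exact h.trans sub_le_iff_le_add
  unfold delta removableCount addableCount
  rw [rem_ncard e (by omega) (a j) (m j) ibar _ _ hL hL',
    add_ncard e (by omega) (a j) (m j) ibar _ _ hL hL']
  omega

/-- Lemma 4.4: if `m` is a multicore with `|γ^{jk}_{il}(m)| ≤ 2` for
all `i, l, j, k`, and `d_ī(m) = d − 1`, then `δ^j_ī(m) ∈ {d−1, d, d+1}` for all `j`. -/
theorem stmt_3 {e r : ℕ} (he : 2 ≤ e) (hr : 0 < r) (a : Fin r → ℤ)
    (m : Multipartition r) (hcore : IsMulticore e a m)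
    (hg : ∀ i < e, ∀ l < e, ∀ j k : Fin r, |gammaD e a m i l j k| ≤ 2)
    (ibar : ℤ) (d : ℤ) (hd : dmin e a m ibar = d - 1) :
    ∀ j : Fin r, delta e a m ibar j = d - 1 ∨ delta e a m ibar j = d ∨
      delta e a m ibar j = d + 1 := by
  obtain ⟨i, hi, l, hl, t, hdl⟩ := delta_eq he a m hcore ibar
  have hbdd : BddBelow {x : ℤ | ∃ j : Fin r, delta e a m ibar j = x} :=
    (Set.finite_range (fun j : Fin r => delta e a m ibar j)).bddBelow
  have hne : {x : ℤ | ∃ j : Fin r, delta e a m ibar j = x}.Nonempty := ⟨_, ⟨0, hr⟩, rfl⟩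
  obtain ⟨k, hk⟩ := Int.csInf_mem hne hbdd
  intro j
  have hle : dmin e a m ibar ≤ delta e a m ibar j := csInf_le hbdd ⟨j, rfl⟩
  change delta e a m ibar k = dmin e a m ibar at hk
  have h := (abs_le.1 (hg i hi l hl j k)).2
  unfold gammaD gamma at h
  have h1 := hdl j
  have h2 := hdl k
  omega

end AK
end

section
/- Let m be a multicore and let m' = s^{jk}_{il}(m) for some i,l ∈ {0,…,e−1} and j,k ∈ {1,…,r}. Fix ī ∈ ℤ/eℤ. Then d_ī(m') ≥ d_ī(m) − 2. Moreover, if γ^{jk}_{il}(m) = 1, then d_ī(m') ≥ d_ī(m) − 1. -/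
/-!
Combinatorial framework for multipartitions, residues, β-sets, abacus levels,
weights, hubs, core blocks and Scopes-type moves, following Fayers and the paper.
Rows and columns of Young diagrams are indexed from 0, so the node in row `b`
and column `c` (0-based) of component `j` has residue `a j + c - b` mod `e`.
-/

open scoped Classical

namespace AK

/-- Level description of an abacus. -/
def IsAb (e : ℕ) (S : Set ℤ) (L : ℤ → ℤ) : Prop :=
  ∀ x : ℤ, x ∈ S ↔ x / (e : ℤ) ≤ L (x % (e : ℤ))

/-- Effect of moving a bead on levels. -/
def mvL (L : ℤ → ℤ) (i l : ℕ) : ℤ → ℤ := fun c =>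
  L c - (if c = (i : ℤ) then 1 else 0) + (if c = (l : ℤ) then 1 else 0)

lemma dm_div {e : ℕ} (q c : ℤ) (h0 : 0 ≤ c) (h1 : c < e) : (q * e + c) / (e : ℤ) = q := by
  have : (e : ℤ) ≠ 0 := by omega
  rw [add_comm, Int.add_mul_ediv_right _ _ this, Int.ediv_eq_zero_of_lt h0 h1]; simp

lemma dm_mod {e : ℕ} (q c : ℤ) (h0 : 0 ≤ c) (h1 : c < e) : (q * e + c) % (e : ℤ) = c := by
  rw [add_comm, Int.add_mul_emod_self_right, Int.emod_eq_of_lt h0 h1]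

lemma dm_eq {e : ℕ} (x q c : ℤ) (h0 : 0 ≤ c) (h1 : c < e) :
    x = q * e + c ↔ x / (e : ℤ) = q ∧ x % (e : ℤ) = c := by
  constructor
  · rintro rfl
    exact ⟨dm_div q c h0 h1, dm_mod q c h0 h1⟩
  · rintro ⟨h, h'⟩
    have := Int.mul_ediv_add_emod x e
    rw [h, h'] at this
    linarith [mul_comm q (e : ℤ)]

lemma IsAb.move {e : ℕ} {S : Set ℤ} {L : ℤ → ℤ} (h : IsAb e S L) {i l : ℕ}
    (hi : i < e) (hl : l < e) (hil : i ≠ l) : IsAb e (moveBead e i l S) (mvL L i l) := by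
  have hi' : (i : ℤ) < e := by exact_mod_cast hi
  have hl' : (l : ℤ) < e := by exact_mod_cast hl
  have hil' : (i : ℤ) ≠ l := by exact_mod_cast hil
  have mi : (i : ℤ) % (e : ℤ) = i := Int.emod_eq_of_lt (by omega) hi'
  have ml : (l : ℤ) % (e : ℤ) = l := Int.emod_eq_of_lt (by omega) hl'
  have hS : sSup {x : ℤ | x % (e : ℤ) = (i : ℤ) % e ∧ x ∈ S} = L i * e + i := by
    apply IsGreatest.csSup_eq
    constructor
    · refine ⟨by rw [dm_mod _ _ (by omega) hi', mi], ?_⟩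
      rw [h, dm_mod _ _ (by omega) hi', dm_div _ _ (by omega) hi']
    · rintro x ⟨hx, hxS⟩
      rw [mi] at hx
      rw [h, hx] at hxS
      have := Int.mul_ediv_add_emod x e
      rw [hx] at this
      nlinarith
  have hI : sInf {x : ℤ | x % (e : ℤ) = (l : ℤ) % e ∧ x ∉ S} = (L l + 1) * e + l := by
    apply IsLeast.csInf_eq
    constructor
    · refine ⟨by rw [dm_mod _ _ (by omega) hl', ml], ?_⟩
      rw [h, dm_mod _ _ (by omega) hl', dm_div _ _ (by omega) hl']
      omega
    · rintro x ⟨hx, hxS⟩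
      rw [ml] at hx
      rw [h, hx] at hxS
      have := Int.mul_ediv_add_emod x e
      rw [hx] at this
      have : L l + 1 ≤ x / e := by omega
      nlinarith
  intro x
  unfold moveBead
  rw [hS, hI]
  simp only [Set.mem_insert_iff, Set.mem_diff, Set.mem_singleton_iff]
  rw [h, dm_eq x _ _ (by omega) hl', dm_eq x _ _ (by omega) hi']
  unfold mvL
  generalize x / (e : ℤ) = q
  generalize x % (e : ℤ) = c
  by_cases h1 : c = i
  · subst h1; simp [hil']; omega
  · by_cases h2 : c = l
    · subst h2; simp [h1]; omega
    · simp [h1, h2]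

lemma mvL_mvL (L : ℤ → ℤ) (i l : ℕ) : mvL (mvL L i l) l i = L := by
  funext c; unfold mvL; ring

lemma IsECore.sub_mul {e : ℕ} {aj : ℤ} {lam : PartitionFun} (h : IsECore e aj lam)
    {x : ℤ} (hx : x ∈ betaSet aj lam) (n : ℕ) : x - n * e ∈ betaSet aj lam := by
  induction n with
  | zero => simpa using hx
  | succ n ih =>
    have := h _ ih
    convert this using 1
    push_cast; ring

lemma core_isAb {e : ℕ} (he : 0 < e) {aj : ℤ} {lam : PartitionFun} (h : IsECore e aj lam) :
    IsAb e (betaSet aj lam)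
      (fun c => sSup {x : ℤ | x * (e : ℤ) + c ∈ betaSet aj lam}) := by
  have he' : (0 : ℤ) < e := by exact_mod_cast he
  intro x
  set c := x % (e : ℤ) with hc
  have c0 : 0 ≤ c := Int.emod_nonneg _ he'.ne'
  have c1 : c < e := Int.emod_lt_of_pos _ he'
  have hx : x = x / e * e + c := by rw [hc]; linarith [Int.mul_ediv_add_emod x e]
  set T := {x : ℤ | x * (e : ℤ) + c ∈ betaSet aj lam} with hT
  have hbdd : BddAbove T := by
    refine ⟨|(lam.part 0 : ℤ) + aj|, ?_⟩
    rintro y ⟨b, hb⟩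
    have h1 := lam.antitone (Nat.zero_le b)
    have h2 : (lam.part b : ℤ) ≤ lam.part 0 := by exact_mod_cast h1
    have h3 := le_abs_self ((lam.part 0 : ℤ) + aj)
    have h4 := abs_nonneg ((lam.part 0 : ℤ) + aj)
    by_contra hlt
    push Not at hlt
    nlinarith
  have hne : T.Nonempty := by
    obtain ⟨N, hN⟩ := lam.finite_support
    refine ⟨-(|aj| + N + 1 + c), (aj - 1 - (-(|aj| + N + 1 + c) * e + c)).toNat, ?_⟩
    have h3 := neg_abs_le aj
    have h4 := abs_nonneg aj
    have h5 : (|aj| + N + 1 + c) * 1 ≤ (|aj| + N + 1 + c) * e := by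
      apply mul_le_mul_of_nonneg_left <;> omega
    have h6 : (N : ℤ) ≤ aj - 1 - (-(|aj| + N + 1 + c) * e + c) := by linarith
    rw [hN _ (by omega)]
    have : (0 : ℤ) ≤ aj - 1 - (-(|aj| + N + 1 + c) * e + c) := by omega
    rw [Int.toNat_of_nonneg this]
    push_cast; ring
  have hmem : sSup T ∈ T := Int.csSup_mem hne hbdd
  constructor
  · intro hxS
    apply le_csSup hbdd
    show x / (e : ℤ) * (e : ℤ) + c ∈ betaSet aj lam
    rwa [← hx]
  · intro hle
    have := h.sub_mul hmem (sSup T - x / e).toNat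
    have h0 : (0 : ℤ) ≤ sSup T - x / e := by simpa using hle
    rw [Int.toNat_of_nonneg h0] at this
    rw [hx]
    convert this using 1
    ring

lemma beta_anti (lam : PartitionFun) {b b' : ℕ} (h : b ≤ b') :
    (lam.part b' : ℤ) ≤ lam.part b := by exact_mod_cast lam.antitone h

lemma image_removable (aj : ℤ) (lam : PartitionFun) (e : ℕ) (t : ℤ) :
    (fun p : ℕ × ℕ => aj + (p.2 : ℤ) - (p.1 : ℤ)) ''
      {p : ℕ × ℕ | lam.Removable p.1 p.2 ∧ (aj + (p.2 : ℤ) - (p.1 : ℤ)) % (e : ℤ) = t % e} =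
    {x : ℤ | x ∈ betaSet aj lam ∧ x - 1 ∉ betaSet aj lam ∧ x % (e : ℤ) = t % e} := by
  ext x
  constructor
  · rintro ⟨⟨b, c⟩, ⟨⟨h1, h2⟩, h3⟩, rfl⟩
    simp only at h1 h2 h3 ⊢
    refine ⟨⟨b, by omega⟩, ?_, h3⟩
    rintro ⟨b', hb'⟩
    rcases le_or_gt b' b with h | h
    · have := beta_anti lam h; omega
    · have := beta_anti lam (Nat.succ_le_of_lt h)
      simp only [Nat.succ_eq_add_one] at this
      omega
  · rintro ⟨⟨b, rfl⟩, h2, h3⟩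
    have hlt : lam.part (b + 1) < lam.part b := by
      have := lam.antitone (Nat.le_succ b)
      rcases lt_or_eq_of_le this with h | h
      · exact h
      · exact absurd ⟨b + 1, by simp only [Nat.succ_eq_add_one] at h; rw [h]; push_cast; ring⟩ h2
    have hx : aj + ((lam.part b - 1 : ℕ) : ℤ) - (b : ℤ) = (lam.part b : ℤ) + aj - ((b : ℤ) + 1) := by
      omega
    refine ⟨(b, lam.part b - 1), ⟨⟨?_, ?_⟩, ?_⟩, hx⟩
    · simp only; omega
    · simp only; omega
    · simp only; rw [hx]; exact h3

lemma image_addable (aj : ℤ) (lam : PartitionFun) (e : ℕ) (t : ℤ) :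
    (fun p : ℕ × ℕ => aj + (p.2 : ℤ) - (p.1 : ℤ)) ''
      {p : ℕ × ℕ | lam.Addable p.1 p.2 ∧ (aj + (p.2 : ℤ) - (p.1 : ℤ)) % (e : ℤ) = t % e} =
    {x : ℤ | x ∉ betaSet aj lam ∧ x - 1 ∈ betaSet aj lam ∧ x % (e : ℤ) = t % e} := by
  ext x
  constructor
  · rintro ⟨⟨b, c⟩, ⟨⟨h1, h2⟩, h3⟩, rfl⟩
    simp only at h1 h2 h3 ⊢
    refine ⟨?_, ⟨b, by omega⟩, h3⟩
    rintro ⟨b', hb'⟩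
    rcases le_or_gt b b' with h | h
    · have := beta_anti lam h; omega
    · have := beta_anti lam (Nat.le_sub_one_of_lt h)
      omega
  · rintro ⟨h1, ⟨b, hb⟩, h3⟩
    have hx : aj + (lam.part b : ℤ) - (b : ℤ) = x := by omega
    refine ⟨(b, lam.part b), ⟨⟨rfl, ?_⟩, ?_⟩, hx⟩
    · simp only
      by_contra hcon
      push Not at hcon
      have := lam.antitone (Nat.sub_le b 1)
      exact h1 ⟨b - 1, by omega⟩
    · simp only; rw [hx]; exact h3

lemma ncard_removable (aj : ℤ) (lam : PartitionFun) (e : ℕ) (t : ℤ) :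
    Set.ncard {p : ℕ × ℕ | lam.Removable p.1 p.2 ∧
      (aj + (p.2 : ℤ) - (p.1 : ℤ)) % (e : ℤ) = t % e} =
    Set.ncard {x : ℤ | x ∈ betaSet aj lam ∧ x - 1 ∉ betaSet aj lam ∧ x % (e : ℤ) = t % e} := by
  rw [← image_removable, Set.ncard_image_of_injOn]
  rintro ⟨b, c⟩ ⟨⟨h1, h2⟩, -⟩ ⟨b', c'⟩ ⟨⟨h1', h2'⟩, -⟩ heq
  simp only at h1 h2 h1' h2' heq
  rcases le_total b b' with h | h <;> have := beta_anti lam h <;> ext <;> simp only <;> omega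

lemma ncard_addable (aj : ℤ) (lam : PartitionFun) (e : ℕ) (t : ℤ) :
    Set.ncard {p : ℕ × ℕ | lam.Addable p.1 p.2 ∧
      (aj + (p.2 : ℤ) - (p.1 : ℤ)) % (e : ℤ) = t % e} =
    Set.ncard {x : ℤ | x ∉ betaSet aj lam ∧ x - 1 ∈ betaSet aj lam ∧ x % (e : ℤ) = t % e} := by
  rw [← image_addable, Set.ncard_image_of_injOn]
  rintro ⟨b, c⟩ ⟨⟨h1, h2⟩, -⟩ ⟨b', c'⟩ ⟨⟨h1', h2'⟩, -⟩ heq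
  simp only at h1 h2 h1' h2' heq
  rcases le_total b b' with h | h <;> have := beta_anti lam h <;> ext <;> simp only <;> omega

/-- Wrap correction. -/
def wrapc (e : ℕ) (t : ℤ) : ℤ := if t % (e : ℤ) = 0 then 1 else 0

lemma pred_div_mod {e : ℕ} (he : 2 ≤ e) (x t : ℤ) (h : x % (e : ℤ) = t % e) :
    (x - 1) / (e : ℤ) = x / e - wrapc e t ∧ (x - 1) % (e : ℤ) = (t - 1) % e := by
  have he' : (0 : ℤ) < e := by omega
  refine ⟨?_, Int.ModEq.sub_right 1 h⟩
  have h0 := Int.emod_nonneg x he'.ne'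
  have h1 := Int.emod_lt_of_pos x he'
  have hx := Int.mul_ediv_add_emod x e
  unfold wrapc
  rw [← h]
  split_ifs with hz
  · rw [show x - 1 = (x / e - 1) * e + (e - 1) by linarith [mul_comm (x / (e:ℤ)) e]]
    exact dm_div _ _ (by omega) (by omega)
  · rw [show x - 1 = (x / e) * e + (x % e - 1) by linarith [mul_comm (x / (e:ℤ)) e]]
    rw [dm_div _ _ (by omega) (by omega)]; ring

lemma ncard_lvl {e : ℕ} (he : 2 ≤ e) (t u v : ℤ) :
    Set.ncard {x : ℤ | x / (e : ℤ) ≤ u ∧ v < x / (e : ℤ) ∧ x % (e : ℤ) = t % e} =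
      (u - v).toNat := by
  have he' : (0 : ℤ) < e := by omega
  have h0 := Int.emod_nonneg t he'.ne'
  have h1 := Int.emod_lt_of_pos t he'
  have : {x : ℤ | x / (e : ℤ) ≤ u ∧ v < x / (e : ℤ) ∧ x % (e : ℤ) = t % e} =
      (fun q : ℤ => q * e + t % e) '' (Set.Ioc v u) := by
    ext x
    constructor
    · rintro ⟨a, b, c⟩
      exact ⟨x / e, ⟨b, a⟩, ((dm_eq x _ _ h0 h1).2 ⟨rfl, c⟩).symm⟩
    · rintro ⟨q, ⟨a, b⟩, rfl⟩
      simp only [Set.mem_setOf_eq]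
      rw [dm_div _ _ h0 h1, dm_mod _ _ h0 h1]
      exact ⟨b, a, rfl⟩
  rw [this, Set.ncard_image_of_injective]
  · rw [← Finset.coe_Ioc, Set.ncard_coe_finset, Int.card_Ioc]
  · intro p q hpq
    have h9 : e ≠ 0 := by omega
    simpa [h9] using hpq

lemma delta_eq_s5 {e r : ℕ} (he : 2 ≤ e) (a : Fin r → ℤ) (m : Multipartition r) (t : ℤ)
    (j : Fin r) {L : ℤ → ℤ} (h : IsAb e (betaSet (a j) (m j)) L) :
    delta e a m t j = L (t % e) - L ((t - 1) % e) - wrapc e t := by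
  have hR : {x : ℤ | x ∈ betaSet (a j) (m j) ∧ x - 1 ∉ betaSet (a j) (m j) ∧
      x % (e : ℤ) = t % e} = {x : ℤ | x / (e : ℤ) ≤ L (t % e) ∧
        L ((t - 1) % e) + wrapc e t < x / (e : ℤ) ∧ x % (e : ℤ) = t % e} := by
    ext x
    simp only [Set.mem_setOf_eq, h x, h (x - 1)]
    by_cases hx : x % (e : ℤ) = t % e
    · obtain ⟨p1, p2⟩ := pred_div_mod he x t hx
      rw [p1, p2, hx]; omega
    · simp [hx]
  have hA : {x : ℤ | x ∉ betaSet (a j) (m j) ∧ x - 1 ∈ betaSet (a j) (m j) ∧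
      x % (e : ℤ) = t % e} = {x : ℤ | x / (e : ℤ) ≤ L ((t - 1) % e) + wrapc e t ∧
        L (t % e) < x / (e : ℤ) ∧ x % (e : ℤ) = t % e} := by
    ext x
    simp only [Set.mem_setOf_eq, h x, h (x - 1)]
    by_cases hx : x % (e : ℤ) = t % e
    · obtain ⟨p1, p2⟩ := pred_div_mod he x t hx
      rw [p1, p2, hx]; omega
    · simp [hx]
  unfold delta removableCount addableCount
  rw [ncard_removable, ncard_addable, hR, hA, ncard_lvl he, ncard_lvl he]
  omega

lemma dmin_le {e r : ℕ} (a : Fin r → ℤ) (m : Multipartition r) (t : ℤ) (j : Fin r) :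
    dmin e a m t ≤ delta e a m t j := by
  apply csInf_le
  · exact (Set.finite_range (fun j => delta e a m t j)).bddBelow
  · exact ⟨j, rfl⟩

lemma le_dmin {e r : ℕ} (hr : 0 < r) (a : Fin r → ℤ) (m : Multipartition r) (t X : ℤ)
    (h : ∀ j, X ≤ delta e a m t j) : X ≤ dmin e a m t := by
  apply le_csInf
  · exact ⟨_, ⟨0, hr⟩, rfl⟩
  · rintro _ ⟨j, rfl⟩
    exact h j

/-- Lemma 4.6: if `m' = s^{jk}_{il}(m)`, then `d_ī(m') ≥ d_ī(m) − 2`;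
and if moreover `γ^{jk}_{il}(m) = 1`, then `d_ī(m') ≥ d_ī(m) − 1`. -/
theorem stmt_5 {e r : ℕ} (he : 2 ≤ e) (hr : 0 < r) (a : Fin r → ℤ)
    (m m' : Multipartition r) (hcore : IsMulticore e a m)
    (i l : ℕ) (hi : i < e) (hl : l < e) (hil : i ≠ l) (j k : Fin r)
    (hswap : IsSwap e a i l j k m m') (ibar : ℤ) :
    dmin e a m' ibar ≥ dmin e a m ibar - 2 ∧
      (gammaD e a m i l j k = 1 → dmin e a m' ibar ≥ dmin e a m ibar - 1) := by
  have he0 : 0 < e := by omega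
  have he' : (0 : ℤ) < e := by omega
  obtain ⟨L, hL⟩ : ∃ L : Fin r → ℤ → ℤ, L = fun t c =>
      sSup {x : ℤ | x * (e : ℤ) + c ∈ betaSet (a t) (m t)} := ⟨_, rfl⟩
  have hAb : ∀ t, IsAb e (betaSet (a t) (m t)) (L t) := by
    intro t; rw [hL]; exact core_isAb he0 (hcore t)
  have hd : ∀ t, delta e a m ibar t =
      L t (ibar % e) - L t ((ibar - 1) % e) - wrapc e ibar :=
    fun t => delta_eq_s5 he a m ibar t (hAb t)
  have hg : gammaD e a m i l j k = (L j i - L k i) - (L j l - L k l) := by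
    rw [hL]; rfl
  have hne : ibar % (e : ℤ) ≠ (ibar - 1) % e := by
    intro hh
    have : (e : ℤ) ∣ ibar - (ibar - 1) := Int.ModEq.dvd (Int.ModEq.symm hh)
    rw [sub_sub_cancel] at this
    have := Int.le_of_dvd one_pos this
    omega
  have hmin := fun t => dmin_le (e := e) a m ibar t
  by_cases hjk : j = k
  · subst hjk
    have hd' : ∀ t, delta e a m' ibar t = delta e a m ibar t := by
      intro t
      rw [hd t]
      apply delta_eq_s5 he
      rw [hswap t]
      unfold swapSets
      by_cases ht : t = j
      · subst ht
        simp only [Function.update_self]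
        have := ((hAb t).move hi hl hil).move hl hi hil.symm
        rwa [mvL_mvL] at this
      · simp only [Function.update_of_ne ht]
        exact hAb t
    have : dmin e a m ibar ≤ dmin e a m' ibar := by
      apply le_dmin hr
      intro t
      rw [hd' t]; exact hmin t
    exact ⟨by omega, fun _ => by omega⟩
  · have hdj : delta e a m' ibar j = mvL (L j) i l (ibar % e) -
        mvL (L j) i l ((ibar - 1) % e) - wrapc e ibar := by
      apply delta_eq_s5 he
      rw [hswap j]
      unfold swapSets
      simp only [Function.update_of_ne hjk, Function.update_self]
      exact (hAb j).move hi hl hil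
    have hdk : delta e a m' ibar k = mvL (L k) l i (ibar % e) -
        mvL (L k) l i ((ibar - 1) % e) - wrapc e ibar := by
      apply delta_eq_s5 he
      rw [hswap k]
      unfold swapSets
      simp only [Function.update_of_ne (Ne.symm hjk), Function.update_self]
      exact (hAb k).move hl hi hil.symm
    have hdt : ∀ t, t ≠ j → t ≠ k → delta e a m' ibar t = delta e a m ibar t := by
      intro t h1 h2
      rw [hd t]
      apply delta_eq_s5 he
      rw [hswap t]
      unfold swapSets
      simp only [Function.update_of_ne h1, Function.update_of_ne h2]
      exact hAb t
    have hmj := hmin j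
    have hmk := hmin k
    rw [hd j] at hmj
    rw [hd k] at hmk
    have hil' : (i : ℤ) ≠ l := by exact_mod_cast hil
    unfold mvL at hdj hdk
    rw [hg]
    generalize ibar % (e : ℤ) = c at *
    generalize (ibar - 1) % (e : ℤ) = c' at *
    constructor
    · apply le_dmin hr
      intro t
      by_cases h1 : t = j
      · subst h1
        rw [hdj]
        split_ifs <;> omega
      · by_cases h2 : t = k
        · subst h2
          rw [hdk]
          split_ifs <;> omega
        · rw [hdt t h1 h2]; have := hmin t; omega
    · intro hγ
      apply le_dmin hr
      intro t
      by_cases h1 : t = j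
      · subst h1
        rw [hdj]
        split_ifs <;> first | omega | (subst_vars; omega)
      · by_cases h2 : t = k
        · subst h2
          rw [hdk]
          split_ifs <;> first | omega | (subst_vars; omega)
        · rw [hdt t h1 h2]; have := hmin t; omega

end AK
end
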